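/- In the n-strand dotted braid group Br_d^n, for every 1 ≤ i ≤ n−2 the identity σ_i (γ_{i+1} σ_{i+1} γ_{i+2})(γ_i σ_i γ_{i+1}) = (γ_{i+1} σ_{i+1} γ_{i+2})(γ_i σ_i γ_{i+1}) σ_{i+1} holds (the image under the dotted-braid embedding of the third Reidemeister relation σ_{i,0} σ_{i+1,1} σ_{i,1} = σ_{i+1,1} σ_{i,1} σ_{i+1,0}). -/

import Mathlib

/-!
Write `a = σ_i`, `b = σ_{i+1}` and `x, y, z` for the dots on strands `i, i+1, i+2`. The four-dot
relation says that `xy` commutes with `a` and `yz` with `b`; also `z` commutes with `a` and `x`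
with `b`. Sliding the inner dots `z x` outwards gives `(y b z)(x a y) = (xy) b a (yz)`.
Multiplying by `a` on the left or by `b` on the right and moving that crossing past the pair of
dots gives `(xy) a b a (yz)` and `(xy) b a b (yz)`, which agree by the braid relation.
-/

/-!
STATEMENT 9: In Br_dⁿ, for consecutive i, j = i+1 one has
σ_i (γ_{i+1} σ_{i+1} γ_{i+2})(γ_i σ_i γ_{i+1}) = (γ_{i+1} σ_{i+1} γ_{i+2})(γ_i σ_i γ_{i+1}) σ_{i+1},
the image under the dotted-braid embedding of the third Reidemeister relation
σ_{i,0} σ_{i+1,1} σ_{i,1} = σ_{i+1,1} σ_{i,1} σ_{i+1,0}.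
-/

namespace MarkedBraids

/-- The left strand `i` of the crossing σ_i, as an index in `Fin n`. -/
def strandL {n : ℕ} (i : Fin (n - 1)) : Fin n :=
  ⟨(i : ℕ), by have := i.isLt; omega⟩

/-- The right strand `i+1` of the crossing σ_i, as an index in `Fin n`. -/
def strandR {n : ℕ} (i : Fin (n - 1)) : Fin n :=
  ⟨(i : ℕ) + 1, by have := i.isLt; omega⟩

/-- The crossing generator σ_i, as a word. -/
def σdw {n : ℕ} (i : Fin (n - 1)) : FreeGroup (Fin (n - 1) ⊕ Fin n) :=
  FreeGroup.of (Sum.inl i)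

/-- The dot generator γ_k, as a word. -/
def γw {n : ℕ} (k : Fin n) : FreeGroup (Fin (n - 1) ⊕ Fin n) :=
  FreeGroup.of (Sum.inr k)

/-- Defining relators of the `n`-strand dotted braid group `Br_dⁿ`. -/
def dottedBraidRels (n : ℕ) : Set (FreeGroup (Fin (n - 1) ⊕ Fin n)) :=
  -- far commutativity of crossings
  {w | ∃ i j : Fin (n - 1), ((i : ℕ) + 2 ≤ (j : ℕ) ∨ (j : ℕ) + 2 ≤ (i : ℕ)) ∧
      w = σdw i * σdw j * (σdw j * σdw i)⁻¹} ∪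
  -- braid relation
  {w | ∃ i j : Fin (n - 1), (j : ℕ) = (i : ℕ) + 1 ∧
      w = σdw i * σdw j * σdw i * (σdw j * σdw i * σdw j)⁻¹} ∪
  -- dots are involutions: γ_k² = e
  {w | ∃ k : Fin n, w = γw k * γw k} ∪
  -- dots commute with each other
  {w | ∃ k l : Fin n, w = γw k * γw l * (γw l * γw k)⁻¹} ∪
  -- four dots around a crossing cancel: γ_i γ_{i+1} σ_i γ_i γ_{i+1} = σ_i
  {w | ∃ i : Fin (n - 1),
      w = γw (strandL i) * γw (strandR i) * σdw i * γw (strandL i) * γw (strandR i) *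
          (σdw i)⁻¹} ∪
  -- a dot on a strand not involved in a crossing commutes with that crossing
  {w | ∃ (i : Fin (n - 1)) (k : Fin n), k ≠ strandL i ∧ k ≠ strandR i ∧
      w = γw k * σdw i * (σdw i * γw k)⁻¹}

/-- The `n`-strand dotted braid group `Br_dⁿ`. -/
abbrev DottedBraidGroup (n : ℕ) := PresentedGroup (dottedBraidRels n)

/-- The crossing generator σ_i of `Br_dⁿ`. -/
def σd {n : ℕ} (i : Fin (n - 1)) : DottedBraidGroup n :=
  PresentedGroup.of (Sum.inl i)

/-- The dot generator γ_k of `Br_dⁿ`. -/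
def γd {n : ℕ} (k : Fin n) : DottedBraidGroup n :=
  PresentedGroup.of (Sum.inr k)

lemma γd_sq {n : ℕ} (k : Fin n) : γd k * γd k = (1 : DottedBraidGroup n) :=
  PresentedGroup.one_of_mem (Or.inl (Or.inl (Or.inl (Or.inr ⟨k, rfl⟩))))

lemma γd_comm {n : ℕ} (k l : Fin n) : Commute (γd k : DottedBraidGroup n) (γd l) :=
  mul_inv_eq_one.mp (PresentedGroup.one_of_mem (Or.inl (Or.inl (Or.inr ⟨k, l, rfl⟩))))

lemma γd_σd_comm {n : ℕ} (i : Fin (n - 1)) (k : Fin n) (hL : k ≠ strandL i)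
    (hR : k ≠ strandR i) : γd k * σd i = (σd i * γd k : DottedBraidGroup n) :=
  mul_inv_eq_one.mp (PresentedGroup.one_of_mem (Or.inr ⟨i, k, hL, hR, rfl⟩))

lemma σd_braid {n : ℕ} (i j : Fin (n - 1)) (hij : (j : ℕ) = (i : ℕ) + 1) :
    σd i * σd j * σd i = (σd j * σd i * σd j : DottedBraidGroup n) :=
  mul_inv_eq_one.mp (PresentedGroup.one_of_mem
    (Or.inl (Or.inl (Or.inl (Or.inl (Or.inr ⟨i, j, hij, rfl⟩))))))

/-- A dot does not commute with an incident crossing, but the pair of dots on both its strands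
does: the four-dot relation combined with `γ_k² = e`. -/
lemma γd_pair_comm {n : ℕ} (i : Fin (n - 1)) :
    (γd (strandL i) * γd (strandR i)) * σd i = σd i * (γd (strandL i) * γd (strandR i)) := by
  have h4 : γd (strandL i) * γd (strandR i) * σd i * γd (strandL i) * γd (strandR i) *
      (σd i)⁻¹ = (1 : DottedBraidGroup n) :=
    PresentedGroup.one_of_mem (Or.inl (Or.inr ⟨i, rfl⟩))
  have hsq : (γd (strandL i) * γd (strandR i)) * (γd (strandL i) * γd (strandR i)) =
      (1 : DottedBraidGroup n) := by
    rw [(γd_comm (strandR i) (strandL i)).mul_mul_mul_comm, γd_sq, γd_sq, mul_one]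
  rw [mul_inv_eq_one, mul_assoc _ (γd (strandL i))] at h4
  calc _ = (γd (strandL i) * γd (strandR i)) * σd i *
        ((γd (strandL i) * γd (strandR i)) * (γd (strandL i) * γd (strandR i))) := by
        rw [hsq, mul_one]
    _ = _ := by rw [← mul_assoc, h4]

theorem dotted_reidemeister_even_odd_odd (n : ℕ) (i j : Fin (n - 1))
    (hij : (j : ℕ) = (i : ℕ) + 1) :
    σd i * ((γd (strandL j) * σd j * γd (strandR j)) *
      (γd (strandL i) * σd i * γd (strandR i))) =
    ((γd (strandL j) * σd j * γd (strandR j)) *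
      (γd (strandL i) * σd i * γd (strandR i)) * σd j : DottedBraidGroup n) := by
  have hLR : strandL j = strandR i := Fin.ext hij
  have hxb := γd_σd_comm j (strandL i) (by simp [strandL, Fin.ext_iff]; omega)
    (by simp [strandL, strandR, Fin.ext_iff]; omega)
  have hza := γd_σd_comm i (strandR j) (by simp [strandL, strandR, Fin.ext_iff]; omega)
    (by simp [strandR, Fin.ext_iff]; omega)
  have hxya := γd_pair_comm i
  have hyzb := γd_pair_comm j
  have hbraid := σd_braid i j hij
  have hxy := (γd_comm (strandL i) (strandR i)).eq
  have hyz := (γd_comm (strandR i) (strandR j)).eq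
  have hxz := (γd_comm (strandL i) (strandR j)).eq
  rw [hLR] at hyzb ⊢
  generalize (γd (strandL i) : DottedBraidGroup n) = x at *
  generalize (γd (strandR i) : DottedBraidGroup n) = y at *
  generalize (γd (strandR j) : DottedBraidGroup n) = z at *
  generalize (σd i : DottedBraidGroup n) = a at *
  generalize (σd j : DottedBraidGroup n) = b at *
  have hslide : (y * b * z) * (x * a * y) = (x * y) * (b * a) * (y * z) :=
    calc (y * b * z) * (x * a * y) = y * b * (z * x) * a * y := by simp only [mul_assoc]
      _ = y * (b * x) * (z * a) * y := by rw [← hxz]; simp only [mul_assoc]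
      _ = (y * x) * (b * a) * (z * y) := by rw [← hxb, hza]; simp only [mul_assoc]
      _ = (x * y) * (b * a) * (y * z) := by rw [hxy, hyz]
  rw [hslide]
  calc a * ((x * y) * (b * a) * (y * z)) = (a * (x * y)) * (b * a) * (y * z) := by
        simp only [mul_assoc]
    _ = (x * y) * (a * b * a) * (y * z) := by rw [← hxya]; simp only [mul_assoc]
    _ = (x * y) * (b * a) * (b * (y * z)) := by rw [hbraid]; simp only [mul_assoc]
    _ = (x * y) * (b * a) * (y * z) * b := by rw [← hyzb]; simp only [mul_assoc]

end MarkedBraids
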